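/- Let F : ℕ → ℂ with ‖F‖_{ℓ^{1,∞}(ℕ)} < ∞. For every finitely supported f : T → ℂ and every λ > 0, the function 𝒫f(x) = Σ_{n≥0} F(n) ∇_ε* f(𝔭ⁿ(x)) (for each x only finitely many terms are nonzero) satisfies μ({x ∈ T : |𝒫f(x)| > λ}) ≤ 3 · ‖F‖_{ℓ^{1,∞}(ℕ)} · ‖ε‖_∞ · ‖f‖_{L¹(μ)} / λ. -/

import Mathlib

open MeasureTheory ENNReal Set Function
open scoped NNReal ENNReal Classical

noncomputable section

/-- A homogeneous tree of degree `q+1` with a distinguished end (mythical ancestor),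
encoded through its graph distance `dist`, horocyclic level function `level`,
and predecessor map `pred`. -/
structure FlowTree (q : ℕ) where
  V : Type
  countableV : Countable V
  dist : V → V → ℕ
  level : V → ℤ
  pred : V → V
  dist_self : ∀ x, dist x x = 0
  eq_of_dist_eq_zero : ∀ x y, dist x y = 0 → x = y
  dist_comm : ∀ x y, dist x y = dist y x
  dist_triangle : ∀ x y z, dist x z ≤ dist x y + dist y z
  level_pred : ∀ x, level (pred x) = level x + 1
  succ_finite : ∀ x, Set.Finite {y | pred y = x}
  succ_card : ∀ x, Nat.card {y // pred y = x} = q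
  dist_le : ∀ (x y : V) (n m : ℕ), pred^[n] x = pred^[m] y → dist x y ≤ n + m
  dist_spec : ∀ x y, ∃ n m : ℕ, pred^[n] x = pred^[m] y ∧ n + m = dist x y

namespace FlowTree

variable {q : ℕ} (S : FlowTree q)

/-- The canonical flow measure weight `μ(x) = q^{ℓ(x)}`, as an extended nonnegative real. -/
def w (x : S.V) : ℝ≥0∞ := (q : ℝ≥0∞) ^ ((S.level x : ℤ) : ℝ)

/-- The canonical flow measure weight `μ(x) = q^{ℓ(x)}`, as a real number. -/
def wR (x : S.V) : ℝ := (q : ℝ) ^ (S.level x)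

/-- The canonical flow measure of a set `E ⊆ T`. -/
def muS (E : Set S.V) : ℝ≥0∞ := ∑' x : E, S.w x

/-- The `L^p(μ)` (quasi)norm, `p ∈ [1,∞]`. -/
def lpNorm (p : ℝ≥0∞) {E : Type*} [NNNorm E] (f : S.V → E) : ℝ≥0∞ :=
  if p = ∞ then ⨆ x, (‖f x‖₊ : ℝ≥0∞)
  else (∑' x, (‖f x‖₊ : ℝ≥0∞) ^ p.toReal * S.w x) ^ (1 / p.toReal)

/-- The weak `L^{1,∞}(μ)` quasinorm `sup_{λ>0} λ · μ({|f| > λ})`. -/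
def wkNorm {E : Type*} [NNNorm E] (f : S.V → E) : ℝ≥0∞ :=
  ⨆ t : ℝ≥0, (t : ℝ≥0∞) * S.muS {x | t < ‖f x‖₊}

/-- `Σf(x) = f(𝔭(x))`. -/
def sig (f : S.V → ℂ) : S.V → ℂ := fun x => f (S.pred x)

/-- `Σ*f(x) = (1/q) Σ_{y ∈ succ(x)} f(y)`. -/
def sigStar (f : S.V → ℂ) : S.V → ℂ :=
  fun x => (q : ℂ)⁻¹ * ∑' y : {y | S.pred y = x}, f y.1

/-- The flow gradient `∇ = id − Σ`. -/
def grad (f : S.V → ℂ) : S.V → ℂ := fun x => f x - f (S.pred x)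

/-- `∇* = id − Σ*`. -/
def gradStar (f : S.V → ℂ) : S.V → ℂ := fun x => f x - S.sigStar f x

/-- The modulus of the gradient `Df(x) = Σ_{y ∼ x} |f(x) − f(y)|`. -/
def Dmod (f : S.V → ℂ) : S.V → ℝ :=
  fun x => ∑' y : {y | S.dist x y = 1}, ‖f x - f y.1‖

/-- `Σ̃_n = Σ^n` for `n ≥ 0` and `(Σ*)^{−n}` for `n < 0`. -/
def sigTilde (n : ℤ) (f : S.V → ℂ) : S.V → ℂ :=
  if 0 ≤ n then (S.sig)^[n.toNat] f else (S.sigStar)^[(-n).toNat] f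

/-- `Σ*` acting on real-valued functions. -/
def sigStarR (f : S.V → ℝ) : S.V → ℝ :=
  fun x => (q : ℝ)⁻¹ * ∑' y : {y | S.pred y = x}, f y.1

/-- The flow Laplacian `𝓛 = id − (Σ + Σ*)/2`, acting pointwise on real functions. -/
def lapR (f : S.V → ℝ) : S.V → ℝ :=
  fun x => f x - (f (S.pred x) + S.sigStarR f x) / 2

/-- `δ_y/μ(y)`, the normalized delta at `y`. -/
def deltaMu (y : S.V) : S.V → ℝ := fun z => if z = y then (S.wR y)⁻¹ else 0

/-- The heat kernel `H_t(x,y)` of the flow Laplacian, i.e. `(e^{−t𝓛} (δ_y/μ(y)))(x)`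
computed via the exponential power series of the bounded operator `𝓛`. -/
def Hker (t : ℝ) (x y : S.V) : ℝ :=
  ∑' n : ℕ, ((-t) ^ n / (n.factorial : ℝ)) * ((S.lapR)^[n] (S.deltaMu y)) x

/-- The integral kernel `K(x,y)` of `𝓛^{−1/2}`, by subordination. -/
def Kker (x y : S.V) : ℝ :=
  (Real.sqrt Real.pi)⁻¹ * ∫ t in Set.Ioi (0 : ℝ), S.Hker t x y * t ^ (-(1 : ℝ)/2)

/-- The Riesz transform `𝓡 = ∇𝓛^{−1/2}`, defined on finitely supported functions. -/
def riesz (f : S.V → ℂ) : S.V → ℂ :=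
  fun x => ∑' y, ((S.Kker x y - S.Kker (S.pred x) y : ℝ) : ℂ) * f y * (S.wR y : ℂ)

/-- The integral operator with almost-radial kernel `q^{−ℓ(x)/2} G(d(x,y)) q^{−ℓ(y)/2}`. -/
def kernelOp (G : ℕ → ℂ) (f : S.V → ℂ) : S.V → ℂ :=
  fun x => ∑' y, (((q : ℝ) ^ (-((S.level x : ℤ) : ℝ)/2) * (q : ℝ) ^ (-((S.level y : ℤ) : ℝ)/2) : ℝ) : ℂ)
    * G (S.dist x y) * f y * (S.wR y : ℂ)

/-- The ε-horizontal gradient `∇_ε f(x) = (1/q) Σ_{y ∈ succ(x)} ε(y) f(y)`. -/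
def hgrad (ε f : S.V → ℂ) : S.V → ℂ :=
  fun x => (q : ℂ)⁻¹ * ∑' y : {y | S.pred y = x}, ε y.1 * f y.1

/-- The adjoint ε-horizontal gradient `∇_ε* f(x) = conj(ε(x)) f(𝔭(x))`. -/
def hgradStar (ε f : S.V → ℂ) : S.V → ℂ :=
  fun x => (starRingEnd ℂ) (ε x) * f (S.pred x)

/-- `‖ε‖_∞`. -/
def epsSup (ε : S.V → ℂ) : ℝ≥0∞ := ⨆ x, (‖ε x‖₊ : ℝ≥0∞)

/-- The `L²(μ)` inner product. -/
def inner2 (f g : S.V → ℂ) : ℂ := ∑' x, f x * (starRingEnd ℂ) (g x) * (S.wR x : ℂ)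

/-- `y ≤ x` iff `d(x,y) = ℓ(x) − ℓ(y)`. -/
def le' (y x : S.V) : Prop := (S.dist x y : ℤ) = S.level x - S.level y

/-- Admissible trapezoids of `(T,μ)`. -/
def IsAdmissibleTrapezoid (F : Set S.V) : Prop :=
  (∃ x, F = {x}) ∨
  ∃ (x₀ : S.V) (h1 h2 : ℕ), 0 < h1 ∧ 2 * h1 ≤ h2 ∧ h2 ≤ 12 * h1 ∧
    F = {x | S.le' x x₀ ∧ S.level x₀ - (h2 : ℤ) < S.level x ∧ S.level x ≤ S.level x₀ - (h1 : ℤ)}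

/-- `(1,∞)`-atoms of `(T,μ)`. -/
def IsOneInftyAtom (a : S.V → ℂ) : Prop :=
  ∃ F : Set S.V, S.IsAdmissibleTrapezoid F ∧ Function.support a ⊆ F ∧
    (∑' x, a x * (S.wR x : ℂ)) = 0 ∧ ∀ x, (‖a x‖₊ : ℝ≥0∞) ≤ (S.muS F)⁻¹

end FlowTree

namespace ZRiesz

/-- The discrete Laplacian on `ℤ`. -/
def deltaZ (F : ℤ → ℝ) : ℤ → ℝ := fun n => F n - (F (n + 1) + F (n - 1)) / 2

/-- The heat kernel `h_t^ℤ = e^{−tΔ_ℤ} δ_0` on `ℤ`, via the exponential power series. -/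
def heatZ (t : ℝ) (n : ℤ) : ℝ :=
  ∑' k : ℕ, ((-t) ^ k / (k.factorial : ℝ)) *
    (deltaZ^[k] (fun m => if m = 0 then (1 : ℝ) else 0)) n

/-- Kernel of the Riesz transform on `ℤ`: `k_ℤ(n) = π^{−1/2} ∫₀^∞ (∇_ℤ h_t^ℤ)(n) t^{−1/2} dt`. -/
def kZ (n : ℤ) : ℝ :=
  (Real.sqrt Real.pi)⁻¹ * ∫ t in Set.Ioi (0 : ℝ), (heatZ t n - heatZ t (n + 1)) * t ^ (-(1 : ℝ)/2)

/-- Kernel of the skew-symmetric part: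
`k̃_ℤ(n) = π^{−1/2} ∫₀^∞ (∇̃_ℤ h_t^ℤ)(n) t^{−1/2} dt`. -/
def ktZ (n : ℤ) : ℝ :=
  (Real.sqrt Real.pi)⁻¹ *
    ∫ t in Set.Ioi (0 : ℝ), (heatZ t (n - 1) - heatZ t (n + 1)) * t ^ (-(1 : ℝ)/2)

/-- The closed formula `k̃_ℤ(m) = (2√2/π) m/(m² − 1/4)`. -/
def ktZc (m : ℤ) : ℝ := (2 * Real.sqrt 2 / Real.pi) * (m : ℝ) / ((m : ℝ) ^ 2 - 1/4)

/-- `G(n) = Σ_{k≥0} q^{−(n+2k)/2} k̃_ℤ(n+2k+1)` (subordination kernel version). -/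
def Gint (q : ℕ) (n : ℕ) : ℝ :=
  ∑' k : ℕ, (q : ℝ) ^ (-(((n : ℝ)) + 2 * (k : ℝ))/2) * ktZ ((n : ℤ) + 2 * (k : ℤ) + 1)

/-- `G(n) = Σ_{k≥0} q^{−(n+2k)/2} k̃_ℤ(n+2k+1)` (closed formula version). -/
def Gc (q : ℕ) (n : ℕ) : ℝ :=
  ∑' k : ℕ, (q : ℝ) ^ (-(((n : ℝ)) + 2 * (k : ℝ))/2) * ktZc ((n : ℤ) + 2 * (k : ℤ) + 1)

/-- The `ℓ^p(ℤ)` norm. -/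
def zlpNorm (p : ℝ≥0∞) (F : ℤ → ℂ) : ℝ≥0∞ :=
  if p = ∞ then ⨆ n, (‖F n‖₊ : ℝ≥0∞)
  else (∑' n : ℤ, (‖F n‖₊ : ℝ≥0∞) ^ p.toReal) ^ (1 / p.toReal)

/-- The `ℓ^{1,∞}(ℕ)` quasinorm. -/
def natWk (F : ℕ → ℂ) : ℝ≥0∞ :=
  ⨆ t : ℝ≥0, (t : ℝ≥0∞) * ∑' (_ : {n : ℕ | t < ‖F n‖₊}), (1 : ℝ≥0∞)

end ZRiesz

/-- The punctured boundary `Ω = ∂T \ {ω_*}` of the tree, together with the measure `ν`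
with `ν(Ω_x) = q^{ℓ(x)}`.  `vert ω n` is the vertex `ω_n` of level `n` on the geodesic
`[ω, ω_*]`. -/
structure FlowTreeBoundary {q : ℕ} (S : FlowTree q) where
  Ω : Type
  mΩ : MeasurableSpace Ω
  ν : @MeasureTheory.Measure Ω mΩ
  vert : Ω → ℤ → S.V
  level_vert : ∀ ω n, S.level (vert ω n) = n
  pred_vert : ∀ ω n, S.pred (vert ω n) = vert ω (n + 1)
  vert_surj : ∀ x : S.V, ∃ ω, vert ω (S.level x) = x
  vert_inj : ∀ ω ω', (∀ n, vert ω n = vert ω' n) → ω = ω'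
  meas_cone : ∀ x : S.V, @MeasurableSet Ω mΩ {ω | vert ω (S.level x) = x}
  nu_cone : ∀ x : S.V, ν {ω | vert ω (S.level x) = x} = (q : ℝ≥0∞) ^ ((S.level x : ℤ) : ℝ)

attribute [instance] FlowTreeBoundary.mΩ

namespace FlowTreeBoundary

variable {q : ℕ} {S : FlowTree q} (B : FlowTreeBoundary S)

/-- The product measure `ν × #` on `Ω × ℤ`. -/
def pm : MeasureTheory.Measure (B.Ω × ℤ) := B.ν.prod MeasureTheory.Measure.count

/-- `Ω_x = {ω : x ∈ [ω, ω_*]}`. -/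
def cone (x : S.V) : Set B.Ω := {ω | B.vert ω (S.level x) = x}

/-- The lifting operator `Φf(ω,n) = f(ω_n)`. -/
def lift (f : S.V → ℂ) : B.Ω × ℤ → ℂ := fun p => f (B.vert p.1 p.2)

/-- The lifting operator on `ℝ≥0∞`-valued functions. -/
def liftNN (f : S.V → ℝ≥0∞) : B.Ω × ℤ → ℝ≥0∞ := fun p => f (B.vert p.1 p.2)

/-- The adjoint `Φ*g(x) = ν(Ω_x)^{−1} ∫_{Ω_x} g(ω, ℓ(x)) dν(ω)`. -/
def liftStar (g : B.Ω × ℤ → ℂ) : S.V → ℂ :=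
  fun x => ((B.ν (B.cone x)).toReal)⁻¹ * ∫ ω in B.cone x, g (ω, S.level x) ∂B.ν

/-- The adjoint `Φ*` on `ℝ≥0∞`-valued functions. -/
def liftStarNN (g : B.Ω × ℤ → ℝ≥0∞) : S.V → ℝ≥0∞ :=
  fun x => (B.ν (B.cone x))⁻¹ * ∫⁻ ω in B.cone x, g (ω, S.level x) ∂B.ν

end FlowTreeBoundary

/-- The weak `L^{1,∞}(μ)` quasinorm with respect to a measure. -/
def wkMeas {α : Type*} [MeasurableSpace α] (μ : MeasureTheory.Measure α) (g : α → ℂ) : ℝ≥0∞ :=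
  ⨆ t : ℝ≥0, (t : ℝ≥0∞) * μ {a | t < ‖g a‖₊}

/-- The weak `L^{1,∞}(μ)` quasinorm for `ℝ≥0∞`-valued functions. -/
def wkMeasNN {α : Type*} [MeasurableSpace α] (μ : MeasureTheory.Measure α) (g : α → ℝ≥0∞) :
    ℝ≥0∞ :=
  ⨆ t : ℝ≥0, (t : ℝ≥0∞) * μ {a | (t : ℝ≥0∞) < g a}

end

namespace Complex

/-- Orthogonality of a mean-zero family to constants, with a uniform bound on the family. -/
theorem sum_normSq_conj_mul_add_le {ι : Type*} [Fintype ι] (a : ι → ℂ) (ha : ∑ i, a i = 0)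
    {A : ℝ} (hA : ∀ i, ‖a i‖ ≤ A) (c H : ℂ) :
    ∑ i, ‖(starRingEnd ℂ) (a i) * c + H‖ ^ 2
      ≤ Fintype.card ι * (A ^ 2 * ‖c‖ ^ 2 + ‖H‖ ^ 2) := by
  have hcross : ∑ i, ((starRingEnd ℂ) (a i) * c * (starRingEnd ℂ) H).re = 0 := by
    rw [← Complex.re_sum, ← Finset.sum_mul, ← Finset.sum_mul, ← map_sum, ha]
    simp
  have hexp : ∀ i, ‖(starRingEnd ℂ) (a i) * c + H‖ ^ 2
      = ‖a i‖ ^ 2 * ‖c‖ ^ 2 + ‖H‖ ^ 2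
        + 2 * ((starRingEnd ℂ) (a i) * c * (starRingEnd ℂ) H).re := by
    intro i
    simp only [← Complex.normSq_eq_norm_sq, Complex.normSq_add, Complex.normSq_mul,
      Complex.normSq_conj]
  simp only [hexp, Finset.sum_add_distrib, ← Finset.mul_sum, hcross, mul_zero, add_zero]
  rw [← Finset.sum_add_distrib, ← nsmul_eq_mul, ← Finset.card_univ]
  refine Finset.sum_le_card_nsmul _ _ _ fun i _ => ?_
  have := hA i
  gcongr

end Complex

namespace ZRiesz

theorem mul_encard_le_natWk (F : ℕ → ℂ) (t : ℝ≥0) :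
    (t : ℝ≥0∞) * ({n : ℕ | t < ‖F n‖₊}.encard : ℝ≥0∞) ≤ natWk F := by
  rw [← ENNReal.tsum_set_one]
  exact le_iSup (fun t : ℝ≥0 => (t : ℝ≥0∞) * ∑' (_ : {n : ℕ | t < ‖F n‖₊}), (1 : ℝ≥0∞)) t

/-- The small values of a weak-`ℓ¹` sequence are square summable. -/
theorem tsum_small_sq_le (F : ℕ → ℂ) (s : ℝ≥0) :
    ∑' n, (if ‖F n‖₊ ≤ s then ‖F n‖ₑ ^ 2 else 0) ≤ 2 * natWk F * s := by
  set g : ℕ → ℝ := fun n => if ‖F n‖₊ ≤ s then ‖F n‖ else 0 with hg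
  have hg0 : ∀ n, 0 ≤ g n := fun n => by simp only [hg]; split_ifs <;> positivity
  have hcake := lintegral_rpow_eq_lintegral_meas_lt_mul (μ := Measure.count)
    (Filter.Eventually.of_forall hg0) (Measurable.of_discrete (f := g)).aemeasurable two_pos
  rw [lintegral_count] at hcake
  have hlhs : ∀ n, ENNReal.ofReal (g n ^ (2 : ℝ))
      = if ‖F n‖₊ ≤ s then ‖F n‖ₑ ^ 2 else 0 := by
    intro n
    rw [Real.rpow_two, ENNReal.ofReal_pow (hg0 n)]
    simp only [hg]
    split_ifs
    · rw [ofReal_norm]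
    · simp
  simp only [hlhs] at hcake
  rw [hcake]
  have hbound : ∫⁻ t in Ioi (0 : ℝ),
      Measure.count {n : ℕ | t < g n} * ENNReal.ofReal (t ^ ((2 : ℝ) - 1))
      ≤ ∫⁻ t in Ioi (0 : ℝ), (Ioo (0 : ℝ) s).indicator (fun _ => natWk F) t := by
    refine setLIntegral_mono' measurableSet_Ioi fun t ht => ?_
    have ht0 : (0 : ℝ) < t := ht
    by_cases hts : t < s
    · rw [indicator_of_mem (show t ∈ Ioo (0 : ℝ) s from ⟨ht0, hts⟩)]
      refine le_trans ?_ (mul_encard_le_natWk F t.toNNReal)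
      rw [mul_comm, show (2 : ℝ) - 1 = 1 by norm_num, Real.rpow_one,
        ← Measure.count_apply (MeasurableSet.of_discrete)]
      change ENNReal.ofReal t * _ ≤ ENNReal.ofReal t * _
      gcongr with n
      intro hn'
      simp only [hg] at hn'
      split_ifs at hn' with h
      · exact (Real.toNNReal_lt_iff_lt_coe ht0.le).2 hn'
      · exact absurd hn' (not_lt.2 ht0.le)
    · have hempty : {n : ℕ | t < g n} = ∅ := by
        refine eq_empty_of_forall_notMem fun n hn => hts (lt_of_lt_of_le hn ?_)
        simp only [hg]
        split_ifs with h
        · exact_mod_cast h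
        · exact s.2
      simp [hempty]
  calc _ ≤ ENNReal.ofReal 2 * ∫⁻ t in Ioi (0 : ℝ),
        (Ioo (0 : ℝ) s).indicator (fun _ => natWk F) t := by gcongr
    _ ≤ ENNReal.ofReal 2 * ∫⁻ t, (Ioo (0 : ℝ) s).indicator (fun _ => natWk F) t := by
        gcongr
        exact Measure.restrict_le_self
    _ = 2 * natWk F * s := by
        rw [lintegral_indicator measurableSet_Ioo]
        simp [mul_assoc]

theorem mul_sum_large_le (F : ℕ → ℂ) (b t : ℝ≥0) (N : ℕ) :
    (t : ℝ≥0∞) * ∑ n ∈ Finset.range N, (if t < ‖F n‖₊ * b then (1 : ℝ≥0∞) else 0)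
      ≤ natWk F * b := by
  rcases eq_or_ne b 0 with rfl | hb
  · simp
  have hb' : 0 < b := pos_iff_ne_zero.2 hb
  have hcard : ∑ n ∈ Finset.range N, (if t < ‖F n‖₊ * b then (1 : ℝ≥0∞) else 0)
      ≤ ({n : ℕ | t / b < ‖F n‖₊}.encard : ℝ≥0∞) := by
    simp only [← div_lt_iff₀ hb']
    rw [← ENNReal.tsum_set_one, tsum_subtype {n : ℕ | t / b < ‖F n‖₊} fun _ => (1 : ℝ≥0∞)]
    exact ENNReal.sum_le_tsum (f := {n : ℕ | t / b < ‖F n‖₊}.indicator fun _ => (1 : ℝ≥0∞)) _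
  calc _ ≤ ((t / b * b : ℝ≥0) : ℝ≥0∞) * ({n : ℕ | t / b < ‖F n‖₊}.encard : ℝ≥0∞) := by
        rw [div_mul_cancel₀ _ hb]
        gcongr
    _ = ((t / b : ℝ≥0) : ℝ≥0∞) * ({n : ℕ | t / b < ‖F n‖₊}.encard : ℝ≥0∞) * b := by
        push_cast
        ring
    _ ≤ natWk F * b := by
        gcongr
        exact mul_encard_le_natWk F _

theorem sum_small_sq_le (F : ℕ → ℂ) (b t : ℝ≥0) (N : ℕ) :
    ∑ n ∈ Finset.range N, (if ‖F n‖₊ * b ≤ t then (‖F n‖ₑ * b) ^ 2 else 0)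
      ≤ 2 * natWk F * b * t := by
  rcases eq_or_ne b 0 with rfl | hb
  · simp
  have hb' : 0 < b := pos_iff_ne_zero.2 hb
  calc _ = (∑ n ∈ Finset.range N, (if ‖F n‖₊ ≤ t / b then ‖F n‖ₑ ^ 2 else 0)) * (b : ℝ≥0∞) ^ 2 := by
        rw [Finset.sum_mul]
        refine Finset.sum_congr rfl fun n _ => ?_
        simp only [le_div_iff₀ hb', ite_mul, zero_mul, mul_pow]
    _ ≤ (2 * natWk F * (t / b : ℝ≥0)) * (b : ℝ≥0∞) ^ 2 := by
        gcongr
        exact (ENNReal.sum_le_tsum _).trans (tsum_small_sq_le F _)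
    _ = 2 * natWk F * b * ((t / b * b : ℝ≥0) : ℝ≥0∞) := by
        push_cast
        ring
    _ = _ := by rw [div_mul_cancel₀ _ hb]

end ZRiesz

namespace FlowTree

variable {q : ℕ} (S : FlowTree q)

theorem w_pred (hq : q ≠ 0) (x : S.V) : S.w (S.pred x) = q * S.w x := by
  simp only [w, S.level_pred]
  push_cast
  rw [ENNReal.rpow_add _ _ (by simpa using hq) (by simp), ENNReal.rpow_one, mul_comm]

theorem tsum_eq_tsum_succ (g : S.V → ℝ≥0∞) :
    ∑' y, g y = ∑' z, ∑' y : {y // S.pred y = z}, g y := by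
  rw [← (Equiv.sigmaFiberEquiv S.pred).tsum_eq g, ENNReal.tsum_sigma']
  rfl

theorem tsum_succ_w_mul (hq : q ≠ 0) (z : S.V) (g : S.V → ℝ≥0∞) :
    q * ∑' y : {y // S.pred y = z}, S.w y * g y
      = S.w z * ∑' y : {y // S.pred y = z}, g y := by
  rw [← ENNReal.tsum_mul_left, ← ENNReal.tsum_mul_left]
  refine tsum_congr fun y => ?_
  rw [← mul_assoc, ← S.w_pred hq, y.2]

/-- Transfer of a fibrewise average bound through the flow measure. -/
theorem tsum_w_mul_le_of_succ (hq : q ≠ 0) (g G : S.V → ℝ≥0∞)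
    (h : ∀ z, ∑' y : {y // S.pred y = z}, g y ≤ q * G z) :
    ∑' y, S.w y * g y ≤ ∑' z, S.w z * G z := by
  rw [S.tsum_eq_tsum_succ]
  refine ENNReal.tsum_le_tsum fun z => ?_
  have hq0 : (q : ℝ≥0∞) ≠ 0 := by simpa using hq
  refine (ENNReal.mul_le_mul_iff_right hq0 (by simp)).1 ?_
  rw [S.tsum_succ_w_mul hq, ← mul_assoc, mul_comm (q : ℝ≥0∞), mul_assoc]
  gcongr
  exact h z

theorem tsum_w_mul_pred_le (hq : q ≠ 0) (G : S.V → ℝ≥0∞) :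
    ∑' y, S.w y * G (S.pred y) ≤ ∑' z, S.w z * G z := by
  refine S.tsum_w_mul_le_of_succ hq _ _ fun z => ?_
  have hG : ∀ y : {y // S.pred y = z}, G (S.pred y) = G z := fun y => by rw [y.2]
  have : Finite {y // S.pred y = z} := S.succ_finite z
  simp only [hG, ENNReal.tsum_const]
  rw [ENat.card_eq_coe_natCard, S.succ_card]
  simp

theorem tsum_w_mul_iterate_pred_le (hq : q ≠ 0) (G : S.V → ℝ≥0∞) (n : ℕ) :
    ∑' y, S.w y * G (S.pred^[n] y) ≤ ∑' z, S.w z * G z := by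
  induction n with
  | zero => rfl
  | succ n ih => exact (S.tsum_w_mul_pred_le hq fun y => G (S.pred^[n] y)).trans ih

theorem tsum_succ_enorm_sq_le (eps : S.V → ℂ)
    (hz : ∀ x : S.V, ∑' y : {y | S.pred y = x}, eps y.1 = 0)
    {A : ℝ≥0} (hA : ∀ x, ‖eps x‖₊ ≤ A) (c H : ℂ) (z : S.V) :
    ∑' y : {y // S.pred y = z}, ‖(starRingEnd ℂ) (eps y) * c + H‖ₑ ^ 2
      ≤ q * ((A : ℝ≥0∞) ^ 2 * ‖c‖ₑ ^ 2 + ‖H‖ₑ ^ 2) := by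
  have : Fintype {y // S.pred y = z} := (S.succ_finite z).fintype
  have h0 : ∑ y : {y // S.pred y = z}, eps y = 0 := by
    rw [← tsum_fintype (L := .unconditional _)]
    exact hz z
  have h := Complex.sum_normSq_conj_mul_add_le (fun y : {y // S.pred y = z} => eps y) h0
    (A := A) (fun y => by exact_mod_cast hA y) c H
  rw [← Nat.card_eq_fintype_card, S.succ_card] at h
  rw [tsum_fintype]
  have h' : ∑ y : {y // S.pred y = z}, ‖(starRingEnd ℂ) (eps y) * c + H‖₊ ^ 2
      ≤ q * (A ^ 2 * ‖c‖₊ ^ 2 + ‖H‖₊ ^ 2) := by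
    rw [← NNReal.coe_le_coe]
    push_cast
    exact h
  simp only [enorm_eq_nnnorm]
  exact_mod_cast h'

/-- The terms `Σⁿ∇_ε*` are mutually orthogonal, also with coefficients depending on the
ancestor of order `n + 1`. -/
theorem tsum_w_mul_enorm_sum_sq_le (hq : q ≠ 0) (eps : S.V → ℂ)
    (hz : ∀ x : S.V, ∑' y : {y | S.pred y = x}, eps y.1 = 0)
    {A : ℝ≥0} (hA : ∀ x, ‖eps x‖₊ ≤ A) (N : ℕ) (c : ℕ → S.V → ℂ) :
    ∑' x, S.w x * ‖∑ n ∈ Finset.range N,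
        (starRingEnd ℂ) (eps (S.pred^[n] x)) * c n (S.pred^[n + 1] x)‖ₑ ^ 2
      ≤ ∑' z, S.w z * ∑ n ∈ Finset.range N, (A : ℝ≥0∞) ^ 2 * ‖c n z‖ₑ ^ 2 := by
  induction N generalizing c with
  | zero => simp
  | succ N ih =>
    set H : S.V → ℂ := fun z => ∑ n ∈ Finset.range N,
      (starRingEnd ℂ) (eps (S.pred^[n] z)) * c (n + 1) (S.pred^[n + 1] z) with hH
    have hsplit : ∀ x, ∑ n ∈ Finset.range (N + 1),
        (starRingEnd ℂ) (eps (S.pred^[n] x)) * c n (S.pred^[n + 1] x)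
        = (starRingEnd ℂ) (eps x) * c 0 (S.pred x) + H (S.pred x) := by
      intro x
      rw [Finset.sum_range_succ', add_comm]
      rfl
    simp only [hsplit]
    calc _ ≤ ∑' z, S.w z * ((A : ℝ≥0∞) ^ 2 * ‖c 0 z‖ₑ ^ 2 + ‖H z‖ₑ ^ 2) := by
          refine S.tsum_w_mul_le_of_succ hq _ _ fun z => ?_
          refine le_of_eq_of_le ?_ (S.tsum_succ_enorm_sq_le eps hz hA (c 0 z) (H z) z)
          exact tsum_congr fun y => by rw [y.2]
      _ = ∑' z, S.w z * ((A : ℝ≥0∞) ^ 2 * ‖c 0 z‖ₑ ^ 2) + ∑' z, S.w z * ‖H z‖ₑ ^ 2 := by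
          rw [← ENNReal.tsum_add]
          simp only [mul_add]
      _ ≤ ∑' z, S.w z * ((A : ℝ≥0∞) ^ 2 * ‖c 0 z‖ₑ ^ 2)
          + ∑' z, S.w z * ∑ n ∈ Finset.range N, (A : ℝ≥0∞) ^ 2 * ‖c (n + 1) z‖ₑ ^ 2 := by
          exact add_le_add_right (ih fun n => c (n + 1)) _
      _ = _ := by
          rw [← ENNReal.tsum_add]
          simp only [Finset.sum_range_succ', ← mul_add, add_comm]

theorem level_iterate_pred (n : ℕ) (x : S.V) : S.level (S.pred^[n] x) = S.level x + n := by
  induction n generalizing x with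
  | zero => simp
  | succ n ih =>
    rw [Function.iterate_succ_apply, ih, S.level_pred]
    push_cast
    ring

theorem iterate_pred_injective (x : S.V) : Function.Injective fun n => S.pred^[n] x := by
  intro m n h
  have := congrArg S.level h
  simp only [level_iterate_pred] at this
  omega

theorem exists_forall_tsum_eq_sum_range (eps : S.V → ℂ) (F : ℕ → ℂ) (f : S.V → ℂ)
    (hf : (Function.support f).Finite) (x : S.V) :
    ∃ N₀ : ℕ, ∀ N ≥ N₀, ∑' n, F n * S.hgradStar eps f (S.pred^[n] x)
      = ∑ n ∈ Finset.range N, F n * S.hgradStar eps f (S.pred^[n] x) := by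
  have hfin : {n : ℕ | S.pred^[n + 1] x ∈ Function.support f}.Finite :=
    hf.preimage ((S.iterate_pred_injective x).comp (add_left_injective 1)).injOn
  obtain ⟨M, hM⟩ := hfin.bddAbove
  refine ⟨M + 1, fun N hN => tsum_eq_sum fun n hn => ?_⟩
  have hnM : ¬ n ≤ M := by
    rw [Finset.mem_range] at hn
    omega
  have h0 : f (S.pred^[n + 1] x) = 0 := by
    by_contra h
    exact hnM (hM h)
  rw [Function.iterate_succ_apply'] at h0
  simp [hgradStar, h0]

theorem nnnorm_le_toNNReal_epsSup {eps : S.V → ℂ} (h : S.epsSup eps ≠ ∞) (x : S.V) :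
    ‖eps x‖₊ ≤ (S.epsSup eps).toNNReal := by
  rw [← ENNReal.coe_le_coe, ENNReal.coe_toNNReal h]
  exact le_iSup (fun x => (‖eps x‖₊ : ℝ≥0∞)) x

theorem muS_eq_tsum_indicator (E : Set S.V) : S.muS E = ∑' x, S.w x * E.indicator 1 x := by
  rw [muS, tsum_subtype E S.w]
  refine tsum_congr fun x => ?_
  by_cases hx : x ∈ E <;> simp [hx]

theorem lpNorm_one (f : S.V → ℂ) : S.lpNorm 1 f = ∑' x, S.w x * ‖f x‖₊ := by
  simp [lpNorm, mul_comm]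

open ZRiesz in
/-- The weak type bound for the truncated operators `Σ_{n < N} F(n) Σⁿ∇_ε*`. -/
theorem mul_muS_sum_range_le (hq : q ≠ 0) (eps : S.V → ℂ)
    (hz : ∀ x : S.V, ∑' y : {y | S.pred y = x}, eps y.1 = 0)
    {A : ℝ≥0} (hA : ∀ x, ‖eps x‖₊ ≤ A) (F : ℕ → ℂ) (f : S.V → ℂ)
    {t : ℝ≥0} (ht : 0 < t) (N : ℕ) :
    t * S.muS {x | t < ‖∑ n ∈ Finset.range N, F n * S.hgradStar eps f (S.pred^[n] x)‖₊}
      ≤ 3 * natWk F * A * S.lpNorm 1 f := by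
  set large : ℕ → S.V → ℝ≥0∞ :=
    fun n z => if t < ‖F n‖₊ * (A * ‖f z‖₊) then 1 else 0 with hlarge
  set c : ℕ → S.V → ℂ :=
    fun n z => if ‖F n‖₊ * (A * ‖f z‖₊) ≤ t then F n * f z else 0 with hc
  set h : S.V → ℂ := fun x => ∑ n ∈ Finset.range N,
    (starRingEnd ℂ) (eps (S.pred^[n] x)) * c n (S.pred^[n + 1] x) with hh
  have ht0 : (t : ℝ≥0∞) ≠ 0 := by exact_mod_cast ht.ne'
  have hpt : ∀ x, t * {x | t < ‖∑ n ∈ Finset.range N,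
        F n * S.hgradStar eps f (S.pred^[n] x)‖₊}.indicator (1 : S.V → ℝ≥0∞) x
      ≤ t * ∑ n ∈ Finset.range N, large n (S.pred^[n + 1] x) + (t : ℝ≥0∞)⁻¹ * ‖h x‖ₑ ^ 2 := by
    intro x
    by_cases hx : t < ‖∑ n ∈ Finset.range N, F n * S.hgradStar eps f (S.pred^[n] x)‖₊
    swap
    · rw [indicator_of_notMem (by simpa using hx)]
      simp
    rw [indicator_of_mem (by exact hx), Pi.one_apply]
    by_cases hl : ∃ n ∈ Finset.range N, t < ‖F n‖₊ * (A * ‖f (S.pred^[n + 1] x)‖₊)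
    · obtain ⟨n, hn, hnt⟩ := hl
      refine le_add_right ?_
      gcongr
      refine le_trans ?_ (Finset.single_le_sum
        (f := fun n => large n (S.pred^[n + 1] x)) (fun _ _ => zero_le) hn)
      simp only [hlarge, if_pos hnt, le_refl]
    · push Not at hl
      have heq : ∑ n ∈ Finset.range N, F n * S.hgradStar eps f (S.pred^[n] x) = h x := by
        refine Finset.sum_congr rfl fun n hn => ?_
        simp only [hc, if_pos (hl n hn), hgradStar]
        rw [← Function.iterate_succ_apply' S.pred]
        ring
      rw [heq] at hx
      refine le_add_left ?_
      have hx' : (t : ℝ≥0∞) ≤ ‖h x‖ₑ := by exact_mod_cast hx.le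
      calc (t : ℝ≥0∞) * 1 = (t : ℝ≥0∞)⁻¹ * (t : ℝ≥0∞) ^ 2 := by
            rw [pow_two, ← mul_assoc, ENNReal.inv_mul_cancel ht0 (by simp), one_mul, mul_one]
        _ ≤ _ := by gcongr
  have hlargesum : ∀ z, t * ∑ n ∈ Finset.range N, large n z ≤ natWk F * (A * ‖f z‖₊) := by
    intro z
    rw [← ENNReal.coe_mul]
    exact mul_sum_large_le F (A * ‖f z‖₊) t N
  have hsmallsum : ∀ z, ∑ n ∈ Finset.range N, (A : ℝ≥0∞) ^ 2 * ‖c n z‖ₑ ^ 2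
      ≤ 2 * natWk F * (A * ‖f z‖₊) * t := by
    intro z
    refine le_of_eq_of_le (Finset.sum_congr rfl fun n _ => ?_)
      (by exact_mod_cast sum_small_sq_le F (A * ‖f z‖₊) t N)
    simp only [hc]
    split_ifs
    · rw [enorm_mul, enorm_eq_nnnorm (f z)]
      push_cast
      ring
    · simp
  have hpart₁ : ∑' x, S.w x * (t * ∑ n ∈ Finset.range N, large n (S.pred^[n + 1] x))
      ≤ natWk F * A * S.lpNorm 1 f := by
    calc _ = ∑ n ∈ Finset.range N, ∑' x, S.w x * (t * large n (S.pred^[n + 1] x)) := by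
          simp only [Finset.mul_sum]
          exact Summable.tsum_finsetSum fun _ _ => ENNReal.summable
      _ ≤ ∑ n ∈ Finset.range N, ∑' z, S.w z * (t * large n z) :=
          Finset.sum_le_sum fun n _ =>
            S.tsum_w_mul_iterate_pred_le hq (fun z => t * large n z) (n + 1)
      _ = ∑' z, S.w z * (t * ∑ n ∈ Finset.range N, large n z) := by
          simp only [Finset.mul_sum]
          exact (Summable.tsum_finsetSum fun _ _ => ENNReal.summable).symm
      _ ≤ ∑' z, natWk F * A * (S.w z * ‖f z‖₊) := by
          refine ENNReal.tsum_le_tsum fun z => ?_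
          calc _ ≤ S.w z * (natWk F * (A * ‖f z‖₊)) := mul_le_mul_right (hlargesum z) _
            _ = _ := by ring
      _ = _ := by rw [ENNReal.tsum_mul_left, lpNorm_one]
  have hpart₂ : ∑' x, S.w x * ((t : ℝ≥0∞)⁻¹ * ‖h x‖ₑ ^ 2)
      ≤ 2 * natWk F * A * S.lpNorm 1 f := by
    calc _ = (t : ℝ≥0∞)⁻¹ * ∑' x, S.w x * ‖h x‖ₑ ^ 2 := by
          rw [← ENNReal.tsum_mul_left]
          exact tsum_congr fun x => by ring
      _ ≤ (t : ℝ≥0∞)⁻¹ * ∑' z, S.w z * (2 * natWk F * (A * ‖f z‖₊) * t) := by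
          refine mul_le_mul_right ((S.tsum_w_mul_enorm_sum_sq_le hq eps hz hA N c).trans ?_) _
          exact ENNReal.tsum_le_tsum fun z => mul_le_mul_right (hsmallsum z) _
      _ = (t : ℝ≥0∞)⁻¹ * (t * (2 * natWk F * A * ∑' z, S.w z * ‖f z‖₊)) := by
          rw [← ENNReal.tsum_mul_left (a := 2 * natWk F * A), ← ENNReal.tsum_mul_left (a := (t : ℝ≥0∞))]
          exact congrArg _ (tsum_congr fun z => by ring)
      _ = _ := by
          rw [← mul_assoc, ENNReal.inv_mul_cancel ht0 (by simp), one_mul, lpNorm_one]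
  rw [muS_eq_tsum_indicator, ← ENNReal.tsum_mul_left]
  calc _ ≤ ∑' x, (S.w x * (t * ∑ n ∈ Finset.range N, large n (S.pred^[n + 1] x))
          + S.w x * ((t : ℝ≥0∞)⁻¹ * ‖h x‖ₑ ^ 2)) := by
        refine ENNReal.tsum_le_tsum fun x => ?_
        rw [mul_left_comm, ← mul_add]
        gcongr
        exact hpt x
    _ ≤ natWk F * A * S.lpNorm 1 f + 2 * natWk F * A * S.lpNorm 1 f := by
        rw [ENNReal.tsum_add]
        gcongr
    _ = _ := by ring

/-- A bound on the measure of sets containing every point of `E` eventually passes to `E`. -/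
theorem muS_le_of_eventually_mem {E : Set S.V} {E' : ℕ → Set S.V} {B : ℝ≥0∞}
    (hE : ∀ x ∈ E, ∃ N₀, ∀ N ≥ N₀, x ∈ E' N) (hB : ∀ N, S.muS (E' N) ≤ B) :
    S.muS E ≤ B := by
  rw [muS_eq_tsum_indicator, ENNReal.tsum_eq_iSup_sum]
  refine iSup_le fun s => ?_
  have hE' : ∀ x, ∃ N₀, ∀ N ≥ N₀, x ∈ E → x ∈ E' N := by
    intro x
    by_cases hx : x ∈ E
    · obtain ⟨N₀, h⟩ := hE x hx
      exact ⟨N₀, fun N hN _ => h N hN⟩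
    · exact ⟨0, fun N _ h => absurd h hx⟩
  choose N₀ hN₀ using hE'
  refine le_trans ?_ (hB (s.sup N₀))
  rw [muS_eq_tsum_indicator]
  refine le_trans (Finset.sum_le_sum fun x hx => ?_) (ENNReal.sum_le_tsum s)
  refine mul_le_mul_right ?_ _
  by_cases hxE : x ∈ E
  · rw [indicator_of_mem hxE, indicator_of_mem (hN₀ x _ (Finset.le_sup hx) hxE)]
  · rw [indicator_of_notMem hxE]
    exact zero_le

end FlowTree

open ZRiesz in
/-- weak type `(1,1)` bound for `𝒫f = Σ_{n≥0} F(n) Σⁿ∇_ε* f` with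
`F ∈ ℓ^{1,∞}(ℕ)`: `μ({|𝒫f| > λ}) ≤ 3 ‖F‖_{ℓ^{1,∞}} ‖ε‖_∞ ‖f‖₁ / λ`. -/
theorem P_operator_weak11 {q : ℕ} (hq : 2 ≤ q) (S : FlowTree q)
    (eps : S.V → ℂ) (hb : ∃ M : ℝ, ∀ x, ‖eps x‖ ≤ M)
    (hz : ∀ x : S.V, ∑' y : {y | S.pred y = x}, eps y.1 = 0)
    (F : ℕ → ℂ) (hF : natWk F ≠ ∞)
    (f : S.V → ℂ) (hf : (Function.support f).Finite) (lam : ℝ) (hlam : 0 < lam) :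
    S.muS {x | lam < ‖∑' n : ℕ, F n * S.hgradStar eps f (S.pred^[n] x)‖}
      ≤ 3 * natWk F * S.epsSup eps * S.lpNorm 1 f / ENNReal.ofReal lam := by
  have hq0 : q ≠ 0 := by omega
  have hsup : S.epsSup eps ≠ ∞ := by
    obtain ⟨M, hM⟩ := hb
    refine ne_top_of_le_ne_top ENNReal.coe_ne_top (b := (M.toNNReal : ℝ≥0∞)) (iSup_le fun x => ?_)
    exact_mod_cast NNReal.le_toNNReal_of_coe_le (hM x)
  refine S.muS_le_of_eventually_mem (E' := fun N => {x | lam.toNNReal <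
    ‖∑ n ∈ Finset.range N, F n * S.hgradStar eps f (S.pred^[n] x)‖₊}) (fun x hx => ?_) fun N => ?_
  · obtain ⟨N₀, hN₀⟩ := S.exists_forall_tsum_eq_sum_range eps F f hf x
    refine ⟨N₀, fun N hN => (Real.toNNReal_lt_iff_lt_coe hlam.le).2 ?_⟩
    have hx' : lam < ‖∑' n : ℕ, F n * S.hgradStar eps f (S.pred^[n] x)‖ := hx
    rwa [hN₀ N hN] at hx'
  · rw [ENNReal.le_div_iff_mul_le (Or.inl (by simpa using hlam)) (Or.inl ENNReal.ofReal_ne_top),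
      mul_comm]
    have h := S.mul_muS_sum_range_le hq0 eps hz (S.nnnorm_le_toNNReal_epsSup hsup) F f
      (Real.toNNReal_pos.2 hlam) N
    rwa [ENNReal.coe_toNNReal hsup] at h
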